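/- For every integer N > 1 and every integer l with 1 ≤ l ≤ N − 1, there exists λ ∈ (0, 1) such that every solution of the cycloid equation (∗) with parameter λ is 2πN-periodic, and every solution that is not identically zero has exactly 2l distinct zeros in [0, 2πN). (These λ are double eigenvalues of the 2πN-periodic problem, whose eigenfunctions are curvature radii of 𝒫-epicycloids closing after N turns with 2l ordinary cusps.) -/

import Mathlib

open Real MeasureTheory

noncomputable section

/-- Determinant of two plane vectors: `[a, b] = a₁b₂ − a₂b₁`. -/
def det2 (a b : ℝ × ℝ) : ℝ := a.1 * b.2 - a.2 * b.1

/-- The dual parameterization `q(θ) = p′(θ)/[p(θ), p′(θ)]`. -/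
def dualQ (p : ℝ → ℝ × ℝ) : ℝ → ℝ × ℝ :=
  fun θ => (det2 (p θ) (deriv p θ))⁻¹ • deriv p θ

/-- `p` is a smooth, symmetric, quadratically convex parameterization of the
unit circle of a normed plane, by the angle its tangent makes with a fixed direction. -/
def IsUnitCircle (p : ℝ → ℝ × ℝ) : Prop :=
  ContDiff ℝ (⊤ : ℕ∞) p ∧ (∀ θ, p (θ + π) = -p θ) ∧
  (∀ θ, 0 < det2 (p θ) (deriv p θ)) ∧
  (∀ θ, 0 < det2 (deriv p θ) (deriv (deriv p) θ))

/-- `u` is a solution of the cycloid equation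
`(1/[p,p'])·(u'/[q,q'])' = −λ·u` for the normed plane with unit circle `p`. -/
def IsCycloidSol (p : ℝ → ℝ × ℝ) (lam : ℝ) (u : ℝ → ℝ) : Prop :=
  ContDiff ℝ 2 u ∧
  ∀ θ, (det2 (p θ) (deriv p θ))⁻¹ *
      deriv (fun t => deriv u t / det2 (dualQ p t) (deriv (dualQ p) t)) θ = -lam * u θ

/-!
With `α = [p, p′]`, `β = [q, q′]` and `v = -u′/β`, the cycloid equation becomes the planar system
`u′ = -β v`, `v′ = λ α u`, whose polar angle satisfies the Prüfer equation
`φ′ = λ α cos² φ + β sin² φ`. Let `φ_λ` be its solution with `φ_λ(0) = 0`. Then `φ_0 = 0`, while for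
`λ = 1` each coordinate of `q`, paired with that of `p`, is a solution, so all solutions are
`π`-antiperiodic and `φ_1(2πN) ≥ 2πN`. Hence `φ_λ(2πN) = 2πl` for some `λ ∈ (0, 1)`.

For this `λ`, the solution with angle `φ_λ` and its translate by `π` are both multiplied by the same
positive factor over `N` turns. They are linearly independent, since otherwise `φ_λ` would grow by a
fixed multiple of `π` on each of the `2N` half-turns, and `2N` would divide `2l`. The Wronskian is
constant, so the factor is `1` and every solution is `2πN`-periodic. Two polar angles never drift
apart by as much as `π`, so the angle of any nonzero solution also grows by exactly `2πl`, and the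
increasing angle passes exactly `2l` zeros of the cosine.
-/

open Set Function Metric Filter Topology
open scoped NNReal ContDiff

section GlobalFlow

variable {E : Type*} [NormedAddCommGroup E] [NormedSpace ℝ E] {F : ℝ → E → E} {K L : ℝ → ℝ≥0}

theorem exists_forall_mem_closedBall_le {X : Type*} [PseudoMetricSpace X] [ProperSpace X]
    {f : X → ℝ≥0} (hf : Continuous f) (x : X) (R : ℝ) : ∃ C, ∀ y ∈ closedBall x R, f y ≤ C :=
  let ⟨C, hC⟩ := (isCompact_closedBall x R).bddAbove_image hf.continuousOn
  ⟨C, fun _ ht => hC (mem_image_of_mem f ht)⟩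

theorem exists_forall_mem_ball_hasDerivAt [CompleteSpace E] (hK : Continuous K) (hL : Continuous L)
    (hlip : ∀ t, LipschitzWith (K t) (F t)) (hcont : ∀ x, Continuous fun t => F t x)
    (hbound : ∀ t x, ‖F t x‖ ≤ L t) (t₀ : ℝ) (x₀ : E) {R : ℝ} (hR : 0 ≤ R) :
    ∃ γ : ℝ → E, γ t₀ = x₀ ∧ ∀ t ∈ ball t₀ R, HasDerivAt γ (F t (γ t)) t := by
  obtain ⟨K', hK'⟩ := exists_forall_mem_closedBall_le hK t₀ R
  obtain ⟨L', hL'⟩ := exists_forall_mem_closedBall_le hL t₀ R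
  rw [Real.closedBall_eq_Icc] at hK' hL'
  have hPL : IsPicardLindelof F (tmin := t₀ - R) (tmax := t₀ + R) ⟨t₀, by constructor <;> linarith⟩
      x₀ (L' * R.toNNReal) 0 L' K' :=
    { lipschitzOnWith := fun t ht => ((hlip t).weaken (hK' t ht)).lipschitzOnWith
      continuousOn := fun x _ => (hcont x).continuousOn
      norm_le := fun t ht x _ => (hbound t x).trans (hL' t ht)
      mul_max_le := by simp [hR] }
  obtain ⟨γ, hγ₀, hγ⟩ := hPL.exists_eq_forall_mem_Icc_hasDerivWithinAt₀
  rw [Real.ball_eq_Ioo]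
  exact ⟨γ, hγ₀, fun t ht => (hγ t (Ioo_subset_Icc_self ht)).hasDerivAt (Icc_mem_nhds ht.1 ht.2)⟩

theorem eqOn_ball_of_hasDerivAt (hK : Continuous K) (hlip : ∀ t, LipschitzWith (K t) (F t))
    {γ δ : ℝ → E} {t₀ R : ℝ} (hγ : ∀ t ∈ ball t₀ R, HasDerivAt γ (F t (γ t)) t)
    (hδ : ∀ t ∈ ball t₀ R, HasDerivAt δ (F t (δ t)) t) (h : γ t₀ = δ t₀) :
    EqOn γ δ (ball t₀ R) := by
  intro t ht
  obtain ⟨C, hC⟩ := exists_forall_mem_closedBall_le hK t₀ R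
  have hlipOn : ∀ t ∈ ball t₀ R, LipschitzOnWith C (F t) univ := fun t ht =>
    ((hlip t).weaken (hC t (ball_subset_closedBall ht))).lipschitzOnWith
  have ht₀ : t₀ ∈ ball t₀ R := mem_ball_self (pos_of_mem_ball ht)
  rw [Real.ball_eq_Ioo] at hlipOn hγ hδ ht ht₀
  exact ODE_solution_unique_of_mem_Ioo hlipOn ht₀ (fun t ht => ⟨hγ t ht, mem_univ _⟩)
    (fun t ht => ⟨hδ t ht, mem_univ _⟩) h ht

theorem isIntegralCurve_eq_of_apply_eq (hK : Continuous K) (hlip : ∀ t, LipschitzWith (K t) (F t))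
    {γ δ : ℝ → E} (hγ : IsIntegralCurve γ F) (hδ : IsIntegralCurve δ F) {t₀ : ℝ}
    (h : γ t₀ = δ t₀) : γ = δ :=
  funext fun t => eqOn_ball_of_hasDerivAt hK hlip (fun t _ => hγ t) (fun t _ => hδ t) h
    (mem_ball.2 (lt_add_one (dist t t₀)))

theorem exists_isIntegralCurve [CompleteSpace E] (hK : Continuous K) (hL : Continuous L)
    (hlip : ∀ t, LipschitzWith (K t) (F t)) (hcont : ∀ x, Continuous fun t => F t x)
    (hbound : ∀ t x, ‖F t x‖ ≤ L t) (t₀ : ℝ) (x₀ : E) :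
    ∃ γ : ℝ → E, γ t₀ = x₀ ∧ IsIntegralCurve γ F := by
  choose γ hγ₀ hγ using fun n : ℕ =>
    exists_forall_mem_ball_hasDerivAt hK hL hlip hcont hbound t₀ x₀ n.cast_nonneg
  have hagree : ∀ {m n : ℕ}, m ≤ n → EqOn (γ m) (γ n) (ball t₀ m) := fun {m n} hmn =>
    eqOn_ball_of_hasDerivAt hK hlip (hγ m)
      (fun t ht => hγ n t (ball_subset_ball (Nat.cast_le.2 hmn) ht)) (by rw [hγ₀, hγ₀])
  let index (t : ℝ) : ℕ := ⌊dist t t₀⌋₊ + 1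
  have hindex (t : ℝ) : t ∈ ball t₀ (index t) := by
    simpa only [index, mem_ball, Nat.cast_add, Nat.cast_one] using Nat.lt_floor_add_one _
  refine ⟨fun t => γ (index t) t, hγ₀ _, fun t => ?_⟩
  have hglue : (fun s => γ (index s) s) =ᶠ[𝓝 t] γ (index t) := by
    filter_upwards [isOpen_ball.mem_nhds (hindex t)] with s hs
    rcases le_total (index s) (index t) with hle | hle
    · exact hagree hle (hindex s)
    · exact (hagree hle hs).symm
  exact (hγ _ t (hindex t)).congr_of_eventuallyEq hglue

end GlobalFlow

section RealAngle

theorem exists_sin_eq_zero_of_pi_le_sub {X : Type*} [TopologicalSpace X] [PreconnectedSpace X]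
    {g : X → ℝ} (hg : Continuous g) {x y : X} (h : π ≤ g y - g x) : ∃ t, sin (g t) = 0 := by
  obtain ⟨n, ⟨hxn, hny⟩, -⟩ := existsUnique_add_zsmul_mem_Ico pi_pos 0 (g x)
  rw [zero_add, zsmul_eq_mul] at hxn hny
  obtain ⟨t, ht⟩ := mem_range_of_exists_le_of_exists_ge hg ⟨x, hxn⟩ ⟨y, by linarith⟩
  exact ⟨t, by rw [ht, sin_int_mul_pi]⟩

theorem apply_eq_of_forall_sin_eq_zero {X : Type*} [TopologicalSpace X] [PreconnectedSpace X]
    {g : X → ℝ} (hg : Continuous g) (h : ∀ t, sin (g t) = 0) (x y : X) : g x = g y := by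
  have hmaps : MapsTo g univ (AddSubgroup.zmultiples π) := fun t _ => by
    obtain ⟨n, hn⟩ := sin_eq_zero_iff.1 (h t)
    exact ⟨n, by simpa using hn⟩
  obtain ⟨c, -, hc⟩ := isPreconnected_univ.eqOn_const_of_mapsTo
    ⟨inferInstanceAs (DiscreteTopology (AddSubgroup.zmultiples π))⟩ hg.continuousOn hmaps
    ⟨0, zero_mem _⟩
  exact (hc (mem_univ x)).trans (hc (mem_univ y)).symm

theorem exists_int_forall_apply_add_nat_mul_eq {φ : ℝ → ℝ} (hφ : Continuous φ) {c : ℝ}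
    (h : ∀ t, sin (φ (t + c) - φ t) = 0) :
    ∃ m : ℤ, ∀ (n : ℕ) (t : ℝ), φ (t + n * c) = φ t + n * (m * π) := by
  obtain ⟨m, hm⟩ := sin_eq_zero_iff.1 (h 0)
  have hstep (t : ℝ) : φ (t + c) = φ t + m * π := by
    linarith [apply_eq_of_forall_sin_eq_zero (by fun_prop) h t 0]
  let Φ : AddConstMap ℝ ℝ c (m * π) := ⟨φ, hstep⟩
  refine ⟨m, fun n t => ?_⟩
  rw [← nsmul_eq_mul, ← nsmul_eq_mul]
  exact AddConstMapClass.map_add_nsmul Φ t n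

theorem ncard_cos_eq_zero_Ico (x : ℝ) (n : ℕ) :
    {y ∈ Ico x (x + n * π) | cos y = 0}.ncard = n := by
  have hinj : Injective fun k : ℤ => (2 * k + 1) * π / 2 := fun j k hjk => by
    have := pi_ne_zero
    field_simp at hjk
    exact_mod_cast (by linarith : (j : ℝ) = k)
  set c : ℤ := ⌈(x - π / 2) / π⌉ with hc
  have hle (k : ℤ) : c ≤ k ↔ x ≤ (2 * k + 1) * π / 2 := by
    rw [hc, Int.ceil_le, div_le_iff₀ pi_pos]
    constructor <;> intro h <;> linarith
  have hlt (k : ℤ) : k < c + n ↔ (2 * k + 1) * π / 2 < x + n * π := by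
    rw [← sub_lt_iff_lt_add, hc, Int.lt_ceil, lt_div_iff₀ pi_pos]
    push_cast
    constructor <;> intro h <;> linarith
  have himage : {y ∈ Ico x (x + n * π) | cos y = 0} =
      (fun k : ℤ => (2 * k + 1) * π / 2) '' Finset.Ico c (c + n) := by
    ext y
    simp only [mem_ofPred_eq, mem_Ico, cos_eq_zero_iff, mem_image, Finset.coe_Ico, hle, hlt]
    constructor
    · rintro ⟨hy, k, rfl⟩
      exact ⟨k, hy, rfl⟩
    · rintro ⟨k, hk, rfl⟩
      exact ⟨hk, k, rfl⟩
  rw [himage, ncard_image_of_injective _ hinj, ncard_coe_finset, Int.card_Ico]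
  simp

theorem ncard_cos_comp_eq_zero_Ico {ψ : ℝ → ℝ} (hψ : Continuous ψ) (hmono : StrictMono ψ)
    {s t : ℝ} {n : ℕ} (h : ψ t = ψ s + n * π) :
    {x ∈ Ico s t | cos (ψ x) = 0}.ncard = n := by
  have himage : ψ '' {x ∈ Ico s t | cos (ψ x) = 0} =
      {y ∈ Ico (ψ s) (ψ s + n * π) | cos y = 0} := by
    rw [← h, ← hψ.image_Ico_of_strictMono hmono]
    exact image_inter_preimage ψ _ {y | cos y = 0}
  rw [← ncard_image_of_injective _ hmono.injective, himage, ncard_cos_eq_zero_Ico]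

end RealAngle

theorem det2_self (x : ℝ × ℝ) : det2 x x = 0 := by
  simp only [det2]; ring

theorem det2_swap (x y : ℝ × ℝ) : det2 x y = -det2 y x := by
  simp only [det2]; ring

theorem det2_neg_right (x y : ℝ × ℝ) : det2 x (-y) = -det2 x y := by
  simp only [det2, Prod.fst_neg, Prod.snd_neg]; ring

theorem det2_smul_smul (r s : ℝ) (x y : ℝ × ℝ) : det2 (r • x) (s • y) = r * s * det2 x y := by
  simp only [det2, Prod.smul_fst, Prod.smul_snd, smul_eq_mul]; ring

theorem det2_smul_smul_add_smul (r s k : ℝ) (x y : ℝ × ℝ) :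
    det2 (r • x) (s • y + k • x) = r * s * det2 x y := by
  simp only [det2, Prod.smul_fst, Prod.smul_snd, Prod.fst_add, Prod.snd_add, smul_eq_mul]; ring

theorem det2_smul_eq_add (x y z : ℝ × ℝ) :
    det2 x y • z = det2 z y • x + det2 x z • y := by
  ext <;>
    simp only [det2, Prod.smul_fst, Prod.smul_snd, Prod.fst_add, Prod.snd_add, smul_eq_mul] <;> ring

theorem hasDerivAt_det2 {x y : ℝ → ℝ × ℝ} {x' y' : ℝ × ℝ} {t : ℝ} (hx : HasDerivAt x x' t)
    (hy : HasDerivAt y y' t) :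
    HasDerivAt (fun s => det2 (x s) (y s)) (det2 x' (y t) + det2 (x t) y') t :=
  ((hx.hasFDerivAt.fst.hasDerivAt.mul hy.hasFDerivAt.snd.hasDerivAt).sub
    (hx.hasFDerivAt.snd.hasDerivAt.mul hy.hasFDerivAt.fst.hasDerivAt)).congr_deriv <| by
      simp only [det2, ContinuousLinearMap.comp_apply, ContinuousLinearMap.coe_fst',
        ContinuousLinearMap.coe_snd', ContinuousLinearMap.toSpanSingleton_apply, one_smul]
      ring

theorem smul_polarCoord_symm (k r θ : ℝ) :
    k • polarCoord.symm (r, θ) = polarCoord.symm (k * r, θ) := by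
  simp only [polarCoord_symm_apply, Prod.smul_mk, smul_eq_mul, mul_assoc]

theorem det2_polarCoord_symm (r s x y : ℝ) :
    det2 (polarCoord.symm (r, x)) (polarCoord.symm (s, y)) = r * s * sin (y - x) := by
  simp only [det2, polarCoord_symm_apply, sin_sub]; ring

theorem exists_pos_polarCoord_symm_eq {z : ℝ × ℝ} (hz : z ≠ 0) :
    ∃ r θ : ℝ, 0 < r ∧ polarCoord.symm (r, θ) = z := by
  have hz' : Complex.equivRealProd.symm z ≠ 0 := fun h =>
    hz (Prod.ext (congrArg Complex.re h) (congrArg Complex.im h))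
  refine ⟨‖Complex.equivRealProd.symm z‖, Complex.arg (Complex.equivRealProd.symm z),
    norm_pos_iff.2 hz', ?_⟩
  rw [polarCoord_symm_apply]
  exact Prod.ext (Complex.norm_mul_cos_arg _) (Complex.norm_mul_sin_arg _)

/-- The right-hand side of the planar linear system `u′ = -β v`, `v′ = α u`, the first-order form
of the Sturm–Liouville equation `(u′ / β)′ = -α u` under the convention `v = -u′ / β`. -/
def sturmField (α β : ℝ → ℝ) (t : ℝ) (z : ℝ × ℝ) : ℝ × ℝ := (-(β t * z.2), α t * z.1)

/-- `z = (u, v)` solves the planar system `u′ = -β v`, `v′ = α u`. -/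
def IsSturmSolution (α β : ℝ → ℝ) (z : ℝ → ℝ × ℝ) : Prop := IsIntegralCurve z (sturmField α β)

/-- The right-hand side of the Prüfer equation `φ′ = α cos² φ + β sin² φ`, which governs the polar
angle of the solutions of `u′ = -β v`, `v′ = α u`. -/
def prueferField (α β : ℝ → ℝ) (t x : ℝ) : ℝ := α t * cos x ^ 2 + β t * sin x ^ 2

/-- `φ` solves the Prüfer equation `φ′ = α cos² φ + β sin² φ`. -/
def IsPrueferAngle (α β φ : ℝ → ℝ) : Prop := IsIntegralCurve φ (prueferField α β)

section Solutions

variable {α β : ℝ → ℝ} {x y z : ℝ → ℝ × ℝ}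

theorem lipschitzWith_sturmField (α β : ℝ → ℝ) (t : ℝ) :
    LipschitzWith (max ‖β t‖₊ ‖α t‖₊) (sturmField α β t) := by
  refine LipschitzWith.prodMk (f := fun z : ℝ × ℝ => -(β t * z.2)) (g := fun z => α t * z.1)
    (LipschitzWith.of_dist_le_mul fun z w => ?_) (LipschitzWith.of_dist_le_mul fun z w => ?_)
  · rw [dist_neg_neg, ← smul_eq_mul, ← smul_eq_mul, dist_smul₀, coe_nnnorm]
    gcongr
    exact le_max_right _ _
  · rw [← smul_eq_mul, ← smul_eq_mul, dist_smul₀, coe_nnnorm]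
    gcongr
    exact le_max_left _ _

namespace IsSturmSolution

theorem eq_of_apply_eq (hα : Continuous α) (hβ : Continuous β) (hx : IsSturmSolution α β x)
    (hy : IsSturmSolution α β y) {t₀ : ℝ} (h : x t₀ = y t₀) : x = y :=
  isIntegralCurve_eq_of_apply_eq (hβ.nnnorm.max hα.nnnorm) (lipschitzWith_sturmField α β) hx hy h

theorem const_smul (hz : IsSturmSolution α β z) (k : ℝ) : IsSturmSolution α β (k • z) := fun t =>
  ((hz t).const_smul k).congr_deriv <| by
    ext <;> simp only [sturmField, Pi.smul_apply, Prod.smul_fst, Prod.smul_snd, smul_eq_mul] <;>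
      ring

theorem comp_add_const (hz : IsSturmSolution α β z) {c : ℝ} (hα : Periodic α c)
    (hβ : Periodic β c) : IsSturmSolution α β fun t => z (t + c) := fun t =>
  ((hz (t + c)).comp_add_const t c).congr_deriv <| by simp only [sturmField, hα t, hβ t]

theorem det2_eq (hx : IsSturmSolution α β x) (hy : IsSturmSolution α β y) (s t : ℝ) :
    det2 (x s) (y s) = det2 (x t) (y t) := by
  have hderiv (t : ℝ) : HasDerivAt (fun t => det2 (x t) (y t)) 0 t :=
    (hasDerivAt_det2 (hx t) (hy t)).congr_deriv <| by simp only [det2, sturmField]; ring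
  exact is_const_of_deriv_eq_zero (fun t => (hderiv t).differentiableAt)
    (fun t => (hderiv t).deriv) s t

theorem apply_add_eq_smul_of_basis (hx : IsSturmSolution α β x) (hy : IsSturmSolution α β y)
    {s : ℝ} (hxy : det2 (x s) (y s) ≠ 0) {T μ : ℝ} (hxT : ∀ t, x (t + T) = μ • x t)
    (hyT : ∀ t, y (t + T) = μ • y t) (hz : IsSturmSolution α β z) (t : ℝ) :
    z (t + T) = μ • z t := by
  have hexpand (t : ℝ) : det2 (x s) (y s) • z t =
      det2 (z s) (y s) • x t + det2 (x s) (z s) • y t := by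
    rw [hx.det2_eq hy s t, hz.det2_eq hy s t, hx.det2_eq hz s t, det2_smul_eq_add]
  refine smul_right_injective _ hxy ?_
  simp only [smul_comm _ μ (z t), hexpand, hxT, hyT, smul_add, smul_comm μ]

theorem eq_one_of_basis (hx : IsSturmSolution α β x) (hy : IsSturmSolution α β y) {s : ℝ}
    (hxy : det2 (x s) (y s) ≠ 0) {T μ : ℝ} (hμ : 0 ≤ μ) (hxT : x (s + T) = μ • x s)
    (hyT : y (s + T) = μ • y s) : μ = 1 := by
  have hdet : μ * μ * det2 (x s) (y s) = det2 (x s) (y s) := by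
    rw [← det2_smul_smul, ← hxT, ← hyT, hx.det2_eq hy]
  nlinarith [mul_eq_right₀ hxy |>.1 hdet]

end IsSturmSolution

theorem lipschitzWith_prueferField (α β : ℝ → ℝ) (t : ℝ) :
    LipschitzWith ‖α t - β t‖₊ (prueferField α β t) := by
  have hderiv (x : ℝ) : HasDerivAt (prueferField α β t) (-((α t - β t) * sin (2 * x))) x :=
    ((((hasDerivAt_cos x).pow 2).const_mul (α t)).add
      (((hasDerivAt_sin x).pow 2).const_mul (β t))).congr_deriv <| by
        rw [sin_two_mul]; push_cast; ring
  refine lipschitzWith_of_nnnorm_deriv_le (fun x => (hderiv x).differentiableAt) fun x => ?_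
  rw [(hderiv x).deriv, nnnorm_neg, nnnorm_mul]
  exact mul_le_of_le_one_right' (abs_sin_le_one (2 * x))

theorem norm_prueferField_le (α β : ℝ → ℝ) (t x : ℝ) :
    ‖prueferField α β t x‖ ≤ ‖α t‖₊ + ‖β t‖₊ := by
  calc ‖prueferField α β t x‖ ≤ |α t * cos x ^ 2| + |β t * sin x ^ 2| := abs_add_le _ _
    _ = |α t| * cos x ^ 2 + |β t| * sin x ^ 2 := by simp only [abs_mul, abs_sq]
    _ ≤ |α t| * 1 + |β t| * 1 := by gcongr; exacts [cos_sq_le_one x, sin_sq_le_one x]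
    _ = ‖α t‖₊ + ‖β t‖₊ := by simp only [mul_one, coe_nnnorm, Real.norm_eq_abs]

theorem prueferField_pos {t : ℝ} (hα : 0 < α t) (hβ : 0 < β t) (x : ℝ) :
    0 < prueferField α β t x := by
  calc 0 < min (α t) (β t) := lt_min hα hβ
    _ = min (α t) (β t) * cos x ^ 2 + min (α t) (β t) * sin x ^ 2 := by
      rw [← mul_add, cos_sq_add_sin_sq, mul_one]
    _ ≤ prueferField α β t x := by
      unfold prueferField
      gcongr
      exacts [min_le_left _ _, min_le_right _ _]

theorem exists_isPrueferAngle (hα : Continuous α) (hβ : Continuous β) (t₀ x₀ : ℝ) :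
    ∃ φ : ℝ → ℝ, φ t₀ = x₀ ∧ IsPrueferAngle α β φ :=
  exists_isIntegralCurve (hα.sub hβ).nnnorm (hα.nnnorm.add hβ.nnnorm)
    (lipschitzWith_prueferField α β) (fun x => by unfold prueferField; fun_prop)
    (norm_prueferField_le α β) t₀ x₀

namespace IsPrueferAngle

variable {φ ψ : ℝ → ℝ}

theorem continuous (hφ : IsPrueferAngle α β φ) : Continuous φ := IsIntegralCurve.continuous hφ

theorem eq_of_apply_eq (hα : Continuous α) (hβ : Continuous β) (hφ : IsPrueferAngle α β φ)
    (hψ : IsPrueferAngle α β ψ) {t₀ : ℝ} (h : φ t₀ = ψ t₀) : φ = ψ :=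
  isIntegralCurve_eq_of_apply_eq (hα.sub hβ).nnnorm (lipschitzWith_prueferField α β) hφ hψ h

theorem strictMono (hα : ∀ t, 0 < α t) (hβ : ∀ t, 0 < β t) (hφ : IsPrueferAngle α β φ) :
    StrictMono φ :=
  strictMono_of_hasDerivAt_pos hφ fun t => prueferField_pos (hα t) (hβ t) (φ t)

theorem exists_isSturmSolution (hα : Continuous α) (hβ : Continuous β)
    (hφ : IsPrueferAngle α β φ) :
    ∃ r : ℝ → ℝ, (∀ t, 0 < r t) ∧ IsSturmSolution α β fun t => polarCoord.symm (r t, φ t) := by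
  let g (t : ℝ) : ℝ := (α t - β t) * (sin (φ t) * cos (φ t))
  have hg : Continuous g := by have := hφ.continuous; fun_prop
  have hr (t : ℝ) : HasDerivAt (fun t => exp (∫ s in 0..t, g s)) (exp (∫ s in 0..t, g s) * g t) t :=
    (hg.integral_hasStrictDerivAt 0 t).hasDerivAt.exp
  refine ⟨fun t => exp (∫ s in 0..t, g s), fun t => exp_pos _, fun t => ?_⟩
  refine (((hr t).mul (hφ t).cos).prodMk ((hr t).mul (hφ t).sin)).congr_deriv (Prod.ext ?_ ?_) <;>
    simp only [g, prueferField, sturmField, polarCoord_symm_apply]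
  · linear_combination (-β t * exp (∫ s in 0..t, g s) * sin (φ t)) * sin_sq_add_cos_sq (φ t)
  · linear_combination (α t * exp (∫ s in 0..t, g s) * cos (φ t)) * sin_sq_add_cos_sq (φ t)

theorem sin_sub_eq_zero (hα : Continuous α) (hβ : Continuous β) (hφ : IsPrueferAngle α β φ)
    (hψ : IsPrueferAngle α β ψ) {s : ℝ} (hs : sin (φ s - ψ s) = 0) (t : ℝ) :
    sin (φ t - ψ t) = 0 := by
  obtain ⟨r, hr, hx⟩ := hφ.exists_isSturmSolution hα hβ
  obtain ⟨ρ, hρ, hy⟩ := hψ.exists_isSturmSolution hα hβ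
  have hwronskian := hy.det2_eq hx t s
  simp only [det2_polarCoord_symm, hs, mul_zero] at hwronskian
  exact (mul_eq_zero.1 hwronskian).resolve_left (mul_pos (hρ t) (hr t)).ne'

theorem sub_sub_sub_lt_pi (hα : Continuous α) (hβ : Continuous β) (hφ : IsPrueferAngle α β φ)
    (hψ : IsPrueferAngle α β ψ) (s t : ℝ) : (φ t - ψ t) - (φ s - ψ s) < π := by
  have hcont : Continuous fun t => φ t - ψ t := hφ.continuous.sub hψ.continuous
  by_contra! hle
  obtain ⟨t₀, ht₀⟩ := exists_sin_eq_zero_of_pi_le_sub hcont hle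
  have hconst := apply_eq_of_forall_sin_eq_zero hcont (hφ.sin_sub_eq_zero hα hβ hψ ht₀) s t
  linarith [pi_pos]

end IsPrueferAngle

theorem IsSturmSolution.exists_eq_polarCoord_symm (hα : Continuous α) (hβ : Continuous β)
    (hz : IsSturmSolution α β z) (hz₀ : z ≠ 0) :
    ∃ r φ : ℝ → ℝ, (∀ t, 0 < r t) ∧ IsPrueferAngle α β φ ∧
      ∀ t, z t = polarCoord.symm (r t, φ t) := by
  obtain ⟨t₀, ht₀⟩ := Function.ne_iff.1 hz₀
  obtain ⟨ρ, θ, hρ, hθ⟩ := exists_pos_polarCoord_symm_eq ht₀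
  obtain ⟨φ, rfl, hφ⟩ := exists_isPrueferAngle hα hβ t₀ θ
  obtain ⟨r, hr, hx⟩ := hφ.exists_isSturmSolution hα hβ
  have hz_eq := hz.eq_of_apply_eq hα hβ (hx.const_smul (ρ / r t₀)) (t₀ := t₀) <| by
    rw [Pi.smul_apply, smul_polarCoord_symm, div_mul_cancel₀ _ (hr t₀).ne', hθ]
  exact ⟨fun t => ρ / r t₀ * r t, φ, fun t => mul_pos (div_pos hρ (hr t₀)) (hr t), hφ,
    fun t => (congrFun hz_eq t).trans (smul_polarCoord_symm _ _ _)⟩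

end Solutions

section Closing

variable {α β φ : ℝ → ℝ} {z : ℝ → ℝ × ℝ} {c : ℝ}

theorem IsPrueferAngle.comp_add_const (hφ : IsPrueferAngle α β φ) (hαc : Periodic α c)
    (hβc : Periodic β c) : IsPrueferAngle α β fun t => φ (t + c) := fun t =>
  ((hφ (t + c)).comp_add_const t c).congr_deriv <| by simp only [prueferField, hαc t, hβc t]

theorem IsPrueferAngle.sin_sub_ne_zero_of_not_dvd (hα : Continuous α) (hβ : Continuous β)
    (hφ : IsPrueferAngle α β φ) (hαc : Periodic α c) (hβc : Periodic β c) {n : ℕ} {k : ℤ} {s : ℝ}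
    (h : φ (s + n * c) = φ s + k * π) (hnk : ¬ (n : ℤ) ∣ k) : sin (φ (s + c) - φ s) ≠ 0 := by
  intro hsin
  obtain ⟨m, hm⟩ := exists_int_forall_apply_add_nat_mul_eq hφ.continuous
    ((hφ.comp_add_const hαc hβc).sin_sub_eq_zero hα hβ hφ hsin)
  have hkm : (k : ℝ) = n * m := by
    refine mul_right_cancel₀ pi_ne_zero ?_
    linarith [hm n s]
  exact hnk ⟨m, by exact_mod_cast hkm⟩

theorem IsSturmSolution.periodic_of_isPrueferAngle (hα : Continuous α) (hβ : Continuous β)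
    (hαc : Periodic α c) (hβc : Periodic β c) (hφ : IsPrueferAngle α β φ) {n : ℕ} {m : ℤ} {s : ℝ}
    (h : φ (s + n * c) = φ s + m * (2 * π)) (hnm : ¬ (n : ℤ) ∣ 2 * m)
    (hz : IsSturmSolution α β z) : Periodic z (n * c) := by
  obtain ⟨r, hr, hx⟩ := hφ.exists_isSturmSolution hα hβ
  set x : ℝ → ℝ × ℝ := fun t => polarCoord.symm (r t, φ t) with hx_def
  set μ : ℝ := r (s + n * c) / r s
  have hy := hx.comp_add_const hαc hβc
  have hxy : det2 (x s) (x (s + c)) ≠ 0 := by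
    rw [hx_def, det2_polarCoord_symm]
    refine mul_ne_zero (mul_pos (hr _) (hr _)).ne' ?_
    exact hφ.sin_sub_ne_zero_of_not_dvd hα hβ hαc hβc (k := 2 * m) (by rw [h]; push_cast; ring) hnm
  have hxT (t : ℝ) : x (t + n * c) = μ • x t := by
    refine congrFun ((hx.comp_add_const (hαc.nat_mul n) (hβc.nat_mul n)).eq_of_apply_eq hα hβ
      (hx.const_smul μ) (t₀ := s) ?_) t
    simp only [hx_def, Pi.smul_apply, smul_polarCoord_symm, μ, div_mul_cancel₀ _ (hr s).ne']
    simp only [polarCoord_symm_apply, h, cos_add_int_mul_two_pi, sin_add_int_mul_two_pi]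
  have hyT (t : ℝ) : x (t + n * c + c) = μ • x (t + c) := by rw [add_right_comm, hxT]
  have hμ : μ = 1 := hx.eq_one_of_basis hy hxy (div_pos (hr _) (hr _)).le (hxT s) (hyT s)
  intro t
  rw [hx.apply_add_eq_smul_of_basis hy hxy hxT hyT hz, hμ, one_smul]

theorem IsSturmSolution.ncard_fst_eq_zero (hα : Continuous α) (hβ : Continuous β)
    (hα₀ : ∀ t, 0 < α t) (hβ₀ : ∀ t, 0 < β t) (hφ : IsPrueferAngle α β φ) {s t : ℝ} {k : ℕ}
    (h : φ t = φ s + k * π) (hz : IsSturmSolution α β z) (hz₀ : z ≠ 0) (hst : z t = z s) :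
    {x ∈ Ico s t | (z x).1 = 0}.ncard = k := by
  obtain ⟨r, ψ, hr, hψ, hzψ⟩ := hz.exists_eq_polarCoord_symm hα hβ hz₀
  have hsin : sin (ψ t - ψ s) = 0 := by
    have hdet := det2_self (z s)
    nth_rw 2 [← hst] at hdet
    rw [hzψ, hzψ, det2_polarCoord_symm] at hdet
    exact (mul_eq_zero.1 hdet).resolve_left (mul_pos (hr s) (hr t)).ne'
  obtain ⟨m, hm⟩ := sin_eq_zero_iff.1 hsin
  have hmk : m = k := by
    have hlt := hψ.sub_sub_sub_lt_pi hα hβ hφ s t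
    have hgt := hφ.sub_sub_sub_lt_pi hα hβ hψ s t
    have hlt' : (m : ℝ) < k + 1 := lt_of_mul_lt_mul_right (by linarith) pi_pos.le
    have hgt' : (k : ℝ) < m + 1 := lt_of_mul_lt_mul_right (by linarith) pi_pos.le
    norm_cast at hlt' hgt'
    lia
  have hψt : ψ t = ψ s + k * π := by
    rw [hmk, Int.cast_natCast] at hm
    linarith
  have hzero (x : ℝ) : (z x).1 = 0 ↔ cos (ψ x) = 0 := by
    simp only [hzψ, polarCoord_symm_apply, mul_eq_zero, (hr x).ne', false_or]
  simp only [hzero, ncard_cos_comp_eq_zero_Ico hψ.continuous (hψ.strictMono hα₀ hβ₀) hψt]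

theorem IsPrueferAngle.add_nat_mul_pi_le (hα : Continuous α) (hβ : Continuous β)
    (hα₀ : ∀ t, 0 < α t) (hβ₀ : ∀ t, 0 < β t) (hφ : IsPrueferAngle α β φ) (hc : 0 < c)
    (hanti : ∀ z, IsSturmSolution α β z → Antiperiodic z c) (n : ℕ) (t : ℝ) :
    φ t + n * π ≤ φ (t + n * c) := by
  obtain ⟨r, hr, hx⟩ := hφ.exists_isSturmSolution hα hβ
  have hsin (t : ℝ) : sin (φ (t + c) - φ t) = 0 := by
    have hdet : r t * r (t + c) * sin (φ (t + c) - φ t) = 0 := by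
      have hneg : polarCoord.symm (r (t + c), φ (t + c)) = -polarCoord.symm (r t, φ t) :=
        hanti _ hx t
      rw [← det2_polarCoord_symm, hneg, det2_neg_right, det2_self, neg_zero]
    exact (mul_eq_zero.1 hdet).resolve_left (mul_pos (hr t) (hr (t + c))).ne'
  obtain ⟨m, hm⟩ := exists_int_forall_apply_add_nat_mul_eq hφ.continuous hsin
  have hm_pos : 0 < m := by
    have hlt := hφ.strictMono hα₀ hβ₀ (lt_add_of_pos_right t hc)
    have hm_pi := hm 1 t
    rw [Nat.cast_one, one_mul, one_mul] at hm_pi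
    exact_mod_cast pos_of_mul_pos_left (by linarith : 0 < m * π) pi_pos.le
  have hm_one : (1 : ℝ) ≤ m := by exact_mod_cast hm_pos
  rw [hm]
  gcongr
  exact le_mul_of_one_le_left pi_pos.le hm_one

end Closing

section Shooting

variable {α β φ : ℝ → ℝ}

theorem IsPrueferAngle.dist_le_gronwallBound {α' ψ : ℝ → ℝ} (hφ : IsPrueferAngle α β φ)
    (hψ : IsPrueferAngle α' β ψ) {s t : ℝ} (hst : s ≤ t) (h : φ s = ψ s) {K : ℝ≥0} {ε : ℝ}
    (hK : ∀ x ∈ Ico s t, ‖α x - β x‖₊ ≤ K) (hε : ∀ x ∈ Ico s t, |α' x - α x| ≤ ε) :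
    dist (φ t) (ψ t) ≤ gronwallBound 0 K ε (t - s) := by
  have hdefect (x : ℝ) (hx : x ∈ Ico s t) :
      dist (prueferField α' β x (ψ x)) (prueferField α β x (ψ x)) ≤ ε := by
    calc dist (prueferField α' β x (ψ x)) (prueferField α β x (ψ x))
        = |α' x - α x| * cos (ψ x) ^ 2 := by
          rw [Real.dist_eq, ← abs_sq (cos (ψ x)), ← abs_mul, prueferField, prueferField]
          ring_nf
      _ ≤ ε := (mul_le_of_le_one_right (abs_nonneg _) (cos_sq_le_one _)).trans (hε x hx)
  have hgronwall := dist_le_of_approx_trajectories_ODE_of_mem (v := prueferField α β)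
    (s := fun _ => univ) (K := K) (f := φ) (g := ψ) (f' := fun x => prueferField α β x (φ x))
    (g' := fun x => prueferField α' β x (ψ x)) (a := s) (b := t) (εf := 0) (εg := ε) (δ := 0)
    (fun x hx => ((lipschitzWith_prueferField α β x).weaken (hK x hx)).lipschitzOnWith)
    hφ.continuous.continuousOn (fun x _ => (hφ x).hasDerivWithinAt) (fun x _ => (dist_self _).le)
    (fun _ _ => mem_univ _) hψ.continuous.continuousOn (fun x _ => (hψ x).hasDerivWithinAt)
    hdefect (fun _ _ => mem_univ _) (by rw [h, dist_self]) t (right_mem_Icc.2 hst)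
  rwa [zero_add] at hgronwall

theorem continuous_apply_of_isPrueferAngle (hα : Continuous α) (hβ : Continuous β)
    {Φ : ℝ → ℝ → ℝ} (hΦ : ∀ lam, IsPrueferAngle (lam • α) β (Φ lam)) {s t x₀ : ℝ} (hst : s ≤ t)
    (hs : ∀ lam, Φ lam s = x₀) : Continuous fun lam => Φ lam t := by
  refine continuous_iff_continuousAt.2 fun lam₀ => ?_
  obtain ⟨K, hK⟩ :=
    exists_forall_mem_closedBall_le ((hα.const_smul lam₀).sub hβ).nnnorm s (t - s)
  obtain ⟨M, hM⟩ := exists_forall_mem_closedBall_le hα.nnnorm s (t - s)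
  have hIco : Ico s t ⊆ closedBall s (t - s) := fun x hx => by
    rw [Real.closedBall_eq_Icc]
    constructor <;> linarith [hx.1, hx.2]
  have hbound (lam : ℝ) :
      dist (Φ lam t) (Φ lam₀ t) ≤ gronwallBound 0 K (|lam - lam₀| * M) (t - s) := by
    rw [dist_comm]
    refine (hΦ lam₀).dist_le_gronwallBound (hΦ lam) hst (by rw [hs, hs])
      (fun x hx => hK x (hIco hx)) fun x hx => ?_
    rw [Pi.smul_apply, Pi.smul_apply, ← sub_smul, smul_eq_mul, abs_mul]
    gcongr
    exact hM x (hIco hx)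
  have hlim : Tendsto (fun lam => gronwallBound 0 K (|lam - lam₀| * M) (t - s)) (𝓝 lam₀) (𝓝 0) :=
    ((gronwallBound_continuous_ε 0 K (t - s)).comp (by fun_prop :
      Continuous fun lam => |lam - lam₀| * (M : ℝ))).tendsto' _ _ <| by
        simp only [comp_apply, sub_self, abs_zero, zero_mul, gronwallBound_ε0_δ0]
  exact tendsto_iff_dist_tendsto_zero.2 (squeeze_zero (fun _ => dist_nonneg) hbound hlim)

theorem exists_isPrueferAngle_smul_apply_eq (hα : Continuous α) (hβ : Continuous β)
    (hφ : IsPrueferAngle α β φ) {s t : ℝ} (hst : s ≤ t) (hs : φ s = 0) {θ : ℝ} (hθ₀ : 0 < θ)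
    (hθ : θ < φ t) :
    ∃ lam ∈ Ioo (0 : ℝ) 1, ∃ ψ : ℝ → ℝ, IsPrueferAngle (lam • α) β ψ ∧ ψ s = 0 ∧ ψ t = θ := by
  choose Φ hΦs hΦ using fun lam : ℝ => exists_isPrueferAngle (hα.const_smul lam) hβ s 0
  have hzero : Φ 0 = 0 := by
    refine (hΦ 0).eq_of_apply_eq (hα.const_smul (0 : ℝ)) hβ (fun x => ?_) (hΦs 0)
    exact (hasDerivAt_const x (0 : ℝ)).congr_deriv (by simp [prueferField])
  have hone : Φ 1 = φ := by
    refine IsPrueferAngle.eq_of_apply_eq hα hβ ?_ hφ ((hΦs 1).trans hs.symm)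
    simpa only [one_smul] using hΦ 1
  obtain ⟨lam, hlam, hΦt⟩ := intermediate_value_Ioo zero_le_one
    (continuous_apply_of_isPrueferAngle hα hβ hΦ hst hΦs).continuousOn
    (show θ ∈ Ioo (Φ 0 t) (Φ 1 t) by rw [hzero, hone]; exact ⟨hθ₀, hθ⟩)
  exact ⟨lam, hlam, Φ lam, hΦ lam, hΦs lam, hΦt⟩

theorem exists_forall_isSturmSolution_periodic_and_ncard_eq (hα : Continuous α)
    (hβ : Continuous β) (hα₀ : ∀ t, 0 < α t) (hβ₀ : ∀ t, 0 < β t) {c : ℝ} (hc : 0 < c)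
    (hαc : Periodic α c) (hβc : Periodic β c)
    (hanti : ∀ z, IsSturmSolution α β z → Antiperiodic z c) {n m : ℕ} (hm : 0 < m)
    (hmn : 2 * m < n) :
    ∃ lam ∈ Ioo (0 : ℝ) 1, ∀ z, IsSturmSolution (lam • α) β z →
      Periodic z (n * c) ∧ (z ≠ 0 → {t ∈ Ico 0 (n * c) | (z t).1 = 0}.ncard = 2 * m) := by
  obtain ⟨φ, hφ₀, hφ⟩ := exists_isPrueferAngle hα hβ 0 0
  have hφn : m * (2 * π) < φ (n * c) := by
    calc m * (2 * π) = ((2 * m : ℕ) : ℝ) * π := by push_cast; ring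
      _ < n * π := by gcongr
      _ ≤ φ (n * c) := by
        simpa only [hφ₀, zero_add] using hφ.add_nat_mul_pi_le hα hβ hα₀ hβ₀ hc hanti n 0
  obtain ⟨lam, hlam, ψ, hψ, hψ₀, hψn⟩ := exists_isPrueferAngle_smul_apply_eq hα hβ hφ
    (by positivity : 0 ≤ n * c) hφ₀ (by positivity) hφn
  have hndvd : ¬ (n : ℤ) ∣ 2 * m := fun hdvd => by
    have := Int.le_of_dvd (by positivity) hdvd
    lia
  have hperiodic {z : ℝ → ℝ × ℝ} (hz : IsSturmSolution (lam • α) β z) : Periodic z (n * c) :=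
    hz.periodic_of_isPrueferAngle (hα.const_smul lam) hβ (hαc.smul lam) hβc hψ (m := m) (s := 0)
      (by rw [zero_add, hψn, hψ₀, zero_add, Int.cast_natCast]) hndvd
  refine ⟨lam, hlam, fun z hz => ⟨hperiodic hz, fun hz₀ => ?_⟩⟩
  refine hz.ncard_fst_eq_zero (hα.const_smul lam) hβ (fun t => smul_pos hlam.1 (hα₀ t)) hβ₀ hψ
    ?_ hz₀ (hperiodic hz).eq
  rw [hψn, hψ₀]
  push_cast
  ring

end Shooting

theorem antiperiodic_deriv {E : Type*} [NormedAddCommGroup E] [NormedSpace ℝ E] {f : ℝ → E} {c : ℝ}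
    (hf : Antiperiodic f c) : Antiperiodic (deriv f) c := fun t => by
  rw [← deriv_comp_add_const, funext hf, deriv.fun_neg]

/-- Twice the area swept by the position vector `p` per unit of its parameter: the weight
`[p, p′]` of the cycloid equation. -/
def areaSpeed (p : ℝ → ℝ × ℝ) (t : ℝ) : ℝ := det2 (p t) (deriv p t)

section Circle

variable {p : ℝ → ℝ × ℝ} {c : ℝ}

theorem contDiff_areaSpeed {n : ℕ∞ω} (hp : ContDiff ℝ (n + 1) p) : ContDiff ℝ n (areaSpeed p) := by
  have hp' : ContDiff ℝ n (deriv p) := hp.deriv'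
  have hp₀ : ContDiff ℝ n p := hp.of_le le_self_add
  exact (hp₀.fst.mul hp'.snd).sub (hp₀.snd.mul hp'.fst)

theorem contDiff_dualQ {n : ℕ∞ω} (hp : ContDiff ℝ (n + 1) p) (h : ∀ t, areaSpeed p t ≠ 0) :
    ContDiff ℝ n (dualQ p) :=
  ((contDiff_areaSpeed hp).inv h).smul hp.deriv'

theorem periodic_areaSpeed (hp : Antiperiodic p c) : Periodic (areaSpeed p) c := fun t => by
  simp only [areaSpeed, hp t, antiperiodic_deriv hp t, det2, Prod.fst_neg, Prod.snd_neg]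
  ring

theorem antiperiodic_dualQ (hp : Antiperiodic p c) : Antiperiodic (dualQ p) c := fun t => by
  change (areaSpeed p (t + c))⁻¹ • deriv p (t + c) = -((areaSpeed p t)⁻¹ • deriv p t)
  rw [periodic_areaSpeed hp t, antiperiodic_deriv hp t, smul_neg]

theorem areaSpeed_smul_dualQ {t : ℝ} (h : areaSpeed p t ≠ 0) :
    areaSpeed p t • dualQ p t = deriv p t :=
  smul_inv_smul₀ h _

theorem det2_dualQ {t : ℝ} (h : areaSpeed p t ≠ 0) : det2 (p t) (dualQ p t) = 1 := by
  have hdet := det2_smul_smul 1 (areaSpeed p t)⁻¹ (p t) (deriv p t)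
  rw [one_smul, one_mul] at hdet
  exact hdet.trans (inv_mul_cancel₀ h)

theorem deriv_dualQ (hp : ContDiff ℝ 2 p) (h : ∀ t, areaSpeed p t ≠ 0) (t : ℝ) :
    deriv (dualQ p) t = -(areaSpeed (dualQ p) t • p t) := by
  have hq : HasDerivAt (dualQ p) (deriv (dualQ p) t) t :=
    ((contDiff_dualQ (n := 1) hp h).differentiable one_ne_zero t).hasDerivAt
  have hp' : HasDerivAt p (deriv p t) t := (hp.differentiable two_ne_zero t).hasDerivAt
  have hdet : det2 (p t) (deriv (dualQ p) t) = 0 := by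
    have hconst : HasDerivAt (fun s => det2 (p s) (dualQ p s)) 0 t := by
      simpa only [det2_dualQ (h _)] using hasDerivAt_const t (1 : ℝ)
    have hunique := (hasDerivAt_det2 hp' hq).unique hconst
    rwa [← areaSpeed_smul_dualQ (h t), ← one_smul ℝ (dualQ p t), smul_smul, det2_smul_smul,
      det2_self, mul_zero, zero_add] at hunique
  have hcramer := det2_smul_eq_add (p t) (dualQ p t) (deriv (dualQ p) t)
  rw [det2_dualQ (h t), hdet, one_smul, zero_smul, add_zero, det2_swap, neg_smul] at hcramer
  exact hcramer

theorem areaSpeed_dualQ (hp : ContDiff ℝ 2 p) (h : ∀ t, areaSpeed p t ≠ 0) (t : ℝ) :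
    areaSpeed (dualQ p) t = det2 (deriv p t) (deriv (deriv p) t) / areaSpeed p t ^ 2 := by
  have hspeed : HasDerivAt (areaSpeed p) (deriv (areaSpeed p) t) t :=
    ((contDiff_areaSpeed (n := 1) hp).differentiable one_ne_zero t).hasDerivAt
  have hp' : HasDerivAt (deriv p) (deriv (deriv p) t) t :=
    ((hp.deriv' (n := 1)).differentiable one_ne_zero t).hasDerivAt
  have hq := (hspeed.inv (h t)).smul hp'
  change det2 ((areaSpeed p t)⁻¹ • deriv p t) (deriv ((areaSpeed p)⁻¹ • deriv p) t) = _
  rw [hq.deriv, Pi.inv_apply, det2_smul_smul_add_smul]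
  field_simp

theorem isSturmSolution_dualQ_prodMk (hp : ContDiff ℝ 2 p) (h : ∀ t, areaSpeed p t ≠ 0)
    (f : ℝ × ℝ →L[ℝ] ℝ) :
    IsSturmSolution (areaSpeed p) (areaSpeed (dualQ p)) fun t => (f (dualQ p t), f (p t)) := by
  intro t
  have hq : HasDerivAt (dualQ p) (deriv (dualQ p) t) t :=
    ((contDiff_dualQ (n := 1) hp h).differentiable one_ne_zero t).hasDerivAt
  have hp' : HasDerivAt p (deriv p t) t := (hp.differentiable two_ne_zero t).hasDerivAt
  refine ((f.hasFDerivAt.comp_hasDerivAt t hq).prodMk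
    (f.hasFDerivAt.comp_hasDerivAt t hp')).congr_deriv ?_
  rw [deriv_dualQ hp h, ← areaSpeed_smul_dualQ (h t)]
  simp only [sturmField, map_neg, map_smul, smul_eq_mul]

theorem antiperiodic_of_isSturmSolution (hp : ContDiff ℝ 2 p) (h : ∀ t, areaSpeed p t ≠ 0)
    (hpc : Antiperiodic p c) {z : ℝ → ℝ × ℝ}
    (hz : IsSturmSolution (areaSpeed p) (areaSpeed (dualQ p)) z) : Antiperiodic z c := by
  have hanti (f : ℝ × ℝ →L[ℝ] ℝ) (t : ℝ) : ((f (dualQ p (t + c)), f (p (t + c))) : ℝ × ℝ) =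
      (-1 : ℝ) • (f (dualQ p t), f (p t)) := by
    rw [antiperiodic_dualQ hpc t, hpc t, map_neg, map_neg, neg_one_smul, Prod.neg_mk]
  have hbasis : det2 ((dualQ p 0).1, (p 0).1) ((dualQ p 0).2, (p 0).2) ≠ 0 := by
    have hdet := det2_dualQ (h 0)
    simp only [det2] at hdet ⊢
    linarith
  intro t
  rw [(isSturmSolution_dualQ_prodMk hp h (.fst ℝ ℝ ℝ)).apply_add_eq_smul_of_basis
    (isSturmSolution_dualQ_prodMk hp h (.snd ℝ ℝ ℝ)) hbasis (hanti _) (hanti _) hz, neg_one_smul]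

theorem isSturmSolution_of_isCycloidSol (hp : ContDiff ℝ 3 p) (h : ∀ t, areaSpeed p t ≠ 0)
    (hq : ∀ t, areaSpeed (dualQ p) t ≠ 0) {lam : ℝ} {u : ℝ → ℝ} (hu : IsCycloidSol p lam u) :
    IsSturmSolution (lam • areaSpeed p) (areaSpeed (dualQ p))
      fun t => (u t, -(deriv u t / areaSpeed (dualQ p) t)) := by
  obtain ⟨hu₂, hequation⟩ := hu
  intro t
  have hu' : HasDerivAt u (deriv u t) t := (hu₂.differentiable two_ne_zero t).hasDerivAt
  have hflux : DifferentiableAt ℝ (fun t => deriv u t / areaSpeed (dualQ p) t) t :=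
    ((hu₂.deriv' (n := 1)).div (contDiff_areaSpeed (n := 1) (contDiff_dualQ (n := 2) hp h))
      hq).differentiable one_ne_zero t
  have hflux_deriv :
      deriv (fun t => deriv u t / areaSpeed (dualQ p) t) t = -(lam * areaSpeed p t * u t) := by
    have hweighted : (areaSpeed p t)⁻¹ * deriv (fun t => deriv u t / areaSpeed (dualQ p) t) t =
      -lam * u t := hequation t
    rw [inv_mul_eq_iff_eq_mul₀ (h t)] at hweighted
    rw [hweighted]
    ring
  refine (hu'.prodMk hflux.hasDerivAt.neg).congr_deriv (Prod.ext ?_ ?_)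
  · simp only [sturmField, mul_neg, neg_neg, mul_div_cancel₀ _ (hq t)]
  · simp only [sturmField, hflux_deriv, neg_neg, Pi.smul_apply, smul_eq_mul]

end Circle

theorem stmt_16_general {p : ℝ → ℝ × ℝ} {c : ℝ} (hp : ContDiff ℝ 3 p) (hc : 0 < c)
    (hpc : Antiperiodic p c) (hpos : ∀ t, 0 < det2 (p t) (deriv p t))
    (hcurv : ∀ t, 0 < det2 (deriv p t) (deriv (deriv p) t)) {N l : ℕ} (hl : 0 < l) (hlN : l < N) :
    ∃ lam : ℝ, 0 < lam ∧ lam < 1 ∧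
      (∀ u : ℝ → ℝ, IsCycloidSol p lam u → ∀ t, u (t + 2 * c * N) = u t) ∧
      (∀ u : ℝ → ℝ, IsCycloidSol p lam u → u ≠ 0 →
        {t ∈ Ico (0 : ℝ) (2 * c * N) | u t = 0}.ncard = 2 * l) := by
  have hp₂ : ContDiff ℝ 2 p := hp.of_le (by norm_num)
  have hp₀ (t : ℝ) : areaSpeed p t ≠ 0 := (hpos t).ne'
  have hq₀ (t : ℝ) : 0 < areaSpeed (dualQ p) t := by
    rw [areaSpeed_dualQ hp₂ hp₀]
    exact div_pos (hcurv t) (pow_pos (hpos t) 2)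
  obtain ⟨lam, ⟨hlam₀, hlam₁⟩, hsol⟩ := exists_forall_isSturmSolution_periodic_and_ncard_eq
    (contDiff_areaSpeed (n := 2) hp).continuous
    (contDiff_areaSpeed (n := 1) (contDiff_dualQ (n := 2) hp hp₀)).continuous hpos hq₀ hc
    (periodic_areaSpeed hpc) (periodic_areaSpeed (antiperiodic_dualQ hpc))
    (fun z hz => antiperiodic_of_isSturmSolution hp₂ hp₀ hpc hz) (n := 2 * N) hl (by lia)
  rw [show ((2 * N : ℕ) : ℝ) * c = 2 * c * N by push_cast; ring] at hsol
  have hcycloid {u : ℝ → ℝ} (hu : IsCycloidSol p lam u) :=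
    hsol _ (isSturmSolution_of_isCycloidSol hp hp₀ (fun t => (hq₀ t).ne') hu)
  refine ⟨lam, hlam₀, hlam₁, fun u hu t => congrArg Prod.fst ((hcycloid hu).1 t),
    fun u hu hu₀ => (hcycloid hu).2 fun hz => hu₀ ?_⟩
  exact funext fun t => congrArg Prod.fst (congrFun hz t)

/-- for every `N > 1` and `1 ≤ l ≤ N-1` there is `λ ∈ (0,1)` such
that every solution of the cycloid equation with parameter `λ` is `2πN`-periodic,
and every nonzero solution has exactly `2l` distinct zeros in `[0, 2πN)`: these
are the epicycloids closing after `N` turns with `2l` cusps. -/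
theorem stmt_16 (p : ℝ → ℝ × ℝ) (hP : IsUnitCircle p)
    (N : ℕ) (hN : 1 < N) (l : ℕ) (hl : 1 ≤ l) (hlN : l ≤ N - 1) :
    ∃ lam : ℝ, 0 < lam ∧ lam < 1 ∧
      (∀ u : ℝ → ℝ, IsCycloidSol p lam u → ∀ θ, u (θ + 2 * π * N) = u θ) ∧
      (∀ u : ℝ → ℝ, IsCycloidSol p lam u → u ≠ 0 →
        {θ ∈ Set.Ico (0:ℝ) (2 * π * N) | u θ = 0}.ncard = 2 * l) := by
  exact stmt_16_general (mod_cast contDiff_infty.1 hP.1 3) pi_pos hP.2.1 hP.2.2.1 hP.2.2.2 hl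
    (by lia)
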